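/- Let U be the μ-a.e. limit of the Chacon-type maps U_n, let h_k = 4^{k−1} − 1, and for n ≥ 2 let Q_n = [0,2^{1−n})×[1−2^{1−n},1) (so μ(Q_n) = 4^{1−n}). Then for every n ≥ 2 and every k ≥ n, μ(U^{h_k}(Q_n) ∩ Q_n) ≥ (1/4)·μ(Q_n) = 4^{−n}. -/

import Mathlib

/-!
For `m ≥ 0` divide the torus into the `4 ^ (m+1)` grid squares of side `2 ^ (-(m+1))`. The map
`chaconU (m+1)` carries each grid square onto a grid square by a translation, so it is described
by a map `cell m` of grid indices (`chaconU_pt`). Under `cell m`, all squares except the lower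
right corner form one column (`IsTower`): it starts at the upper left corner square, passes
through every square other than the lower right one, and ends, after `4 ^ (m+1) - 2` steps, at
the left neighbour of the lower right corner. To pass to `m+1`, the column is cut into
four subcolumns, one for each quarter of a grid square, and these are stacked with three of the
quarters of the lower right corner as spacers (`IsTower.pieces`).

No spacer lies between the first two subcolumns, which consist of the upper left and the upper right
quarters. Hence, for `k = m + 2`, the power `h_k = 4 ^ (m+1) - 1` (the height of the column of
`cell m`) takes each upper left quarter to the upper right quarter of the same square
(`cell_return`). Along this stretch of orbit the maps `chaconU n` with `n ≥ k` all agree, since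
they differ only inside the lower right corner square (`chaconU_stable`); so for almost every
point the same holds for `U` (`iterate_return`).

Finally `Q_n` is a union of grid squares. Four translates of the set `E` of its upper left quarters
cover it, so `E` has at least a quarter of the measure, and `U ^ h_k` acts on almost all of `E` as a
translation into `Q_n`.
-/


open MeasureTheory Filter Set
open scoped ENNReal symmDiff

noncomputable section

instance fact01 : Fact ((0:ℝ) < 1) := ⟨one_pos⟩

/-- The two-dimensional torus `[0,1)²` with coordinatewise addition mod 1. -/
abbrev T2 : Type := AddCircle (1:ℝ) × AddCircle (1:ℝ)

/-- The canonical representative in `[0,1)` of a point of the circle. -/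
noncomputable def rep (x : AddCircle (1:ℝ)) : ℝ := ((AddCircle.equivIco 1 0) x : ℝ)

/-- The point of the torus with coordinates `a`, `b` (mod 1). -/
noncomputable def tv (a b : ℝ) : T2 := ((a : AddCircle (1:ℝ)), (b : AddCircle (1:ℝ)))

open Classical in
/-- The Chacon-type maps `U_n` on the torus. -/
noncomputable def chaconU : ℕ → T2 → T2
  | 0 => id
  | 1 => fun x =>
      if 0 ≤ rep x.1 ∧ rep x.1 < 1/2 ∧ 1/2 ≤ rep x.2 ∧ rep x.2 < 1 then x + tv (1/2) 0
      else if 1/2 ≤ rep x.1 ∧ rep x.1 < 1 ∧ 1/2 ≤ rep x.2 ∧ rep x.2 < 1 then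
        x + tv (-(1/2)) (-(1/2))
      else if 0 ≤ rep x.1 ∧ rep x.1 < 1/2 ∧ 0 ≤ rep x.2 ∧ rep x.2 < 1/2 then x + tv 0 (1/2)
      else x
  | (n+2) => fun x =>
      let s : ℝ := 1 / 2 ^ (n+2)
      let a := rep x.1
      let b := rep x.2
      if 1-4*s ≤ a ∧ a < 1-3*s ∧ s ≤ b ∧ b < 2*s then x + tv (5*s-1) (1-2*s)
      else if 1-3*s ≤ a ∧ a < 1-2*s ∧ s ≤ b ∧ b < 2*s then x + tv s 0
      else if 1-4*s ≤ a ∧ a < 1-3*s ∧ 0 ≤ b ∧ b < s then x + tv (3*s) s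
      else if 1-3*s ≤ a ∧ a < 1-2*s ∧ 0 ≤ b ∧ b < s then x + tv s 0
      else if 1-2*s ≤ a ∧ a < 1 ∧ s ≤ b ∧ b < 2*s then x + tv (2*s-1) (1-3*s)
      else if 1-2*s ≤ a ∧ a < 1-s ∧ 0 ≤ b ∧ b < s then x + tv (2*s-1) (1-s)
      else if 1-s ≤ a ∧ a < 1 ∧ 0 ≤ b ∧ b < s then x
      else chaconU (n+1) x

/-- An automorphism of the torus: measurable, bijective up to null sets with measurable
inverse, and measure-preserving. -/
def IsAutomorphism (U : T2 → T2) : Prop :=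
  Measurable U ∧ ∃ V : T2 → T2, Measurable V ∧
    (∀ᵐ x ∂(volume : Measure T2), V (U x) = x) ∧
    (∀ᵐ x ∂(volume : Measure T2), U (V x) = x) ∧
    ∀ A : Set T2, MeasurableSet A → volume (U ⁻¹' A) = volume A

/-! ### The induced permutation of grid squares -/

/-- The action of `chaconU (m+1)` on the squares of the grid of side `2 ^ (-(m+1))`; the pair
`(i, j)` stands for the square whose lower left corner is `(i, j) / 2 ^ (m+1)`. -/
def cell : ℕ → ℕ × ℕ → ℕ × ℕ
  | 0 => fun p =>
      if p = (0, 1) then (1, 1) else if p = (1, 1) then (0, 0)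
      else if p = (0, 0) then (0, 1) else p
  | (m+1) => fun p =>
      if p = (2 ^ (m+2) - 4, 1) then (1, 2 ^ (m+2) - 1)
      else if p = (2 ^ (m+2) - 3, 1) then (2 ^ (m+2) - 2, 1)
      else if p = (2 ^ (m+2) - 4, 0) then (2 ^ (m+2) - 1, 1)
      else if p = (2 ^ (m+2) - 3, 0) then (2 ^ (m+2) - 2, 0)
      else if p = (2 ^ (m+2) - 2, 1) then (0, 2 ^ (m+2) - 2)
      else if p = (2 ^ (m+2) - 1, 1) then (1, 2 ^ (m+2) - 2)
      else if p = (2 ^ (m+2) - 2, 0) then (0, 2 ^ (m+2) - 1)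
      else if p = (2 ^ (m+2) - 1, 0) then p
      else (2 * (cell m (p.1 / 2, p.2 / 2)).1 + p.1 % 2,
            2 * (cell m (p.1 / 2, p.2 / 2)).2 + p.2 % 2)

/-- The quarter `α ∈ {0, 1}²` of the grid square `p`, as a square of the next finer grid. -/
def dbl (p α : ℕ × ℕ) : ℕ × ℕ := (2 * p.1 + α.1, 2 * p.2 + α.2)
/-- The upper left corner square, first level of the column. -/
def baseC (m : ℕ) : ℕ × ℕ := (0, 2 ^ (m+1) - 1)
/-- The left neighbour of the lower right corner square, last level of the column. -/
def topC (m : ℕ) : ℕ × ℕ := (2 ^ (m+1) - 2, 0)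
/-- The lower right corner square, the only one outside the column. -/
def cornerC (m : ℕ) : ℕ × ℕ := (2 ^ (m+1) - 1, 0)

lemma two_pow_facts (m : ℕ) : 2 ≤ 2 ^ (m+1) ∧ 2 ^ (m+2) = 2 * 2 ^ (m+1) := by
  have : 1 ≤ 2 ^ m := Nat.one_le_two_pow
  constructor
  · rw [pow_succ]; omega
  · ring

/-- Away from the top level and the corner, passing to the finer grid does not change the map. -/
lemma cell_dbl (m : ℕ) (p α : ℕ × ℕ) (h1 : α.1 < 2) (h2 : α.2 < 2)
    (ht : p ≠ topC m) (hd : p ≠ cornerC m) :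
    cell (m+1) (dbl p α) = dbl (cell m p) α := by
  obtain ⟨hN, hM⟩ := two_pow_facts m
  obtain ⟨i, j⟩ := p
  obtain ⟨a, b⟩ := α
  simp only [topC, cornerC, ne_eq, Prod.mk.injEq, not_and] at ht hd h1 h2
  have e1 : (2 * i + a) / 2 = i := by omega
  have e2 : (2 * j + b) / 2 = j := by omega
  have e3 : (2 * i + a) % 2 = a := by omega
  have e4 : (2 * j + b) % 2 = b := by omega
  simp only [cell, dbl, e1, e2, e3, e4, Prod.mk.injEq]
  repeat rw [if_neg (by omega)]

/-- How the quarters of the top level and of the corner (the spacers) join the subcolumns. -/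
lemma cell_special (m : ℕ) :
    cell (m+1) (dbl (topC m) (0, 1)) = dbl (baseC m) (1, 1) ∧
    cell (m+1) (dbl (topC m) (1, 1)) = dbl (cornerC m) (0, 1) ∧
    cell (m+1) (dbl (cornerC m) (0, 1)) = dbl (baseC m) (0, 0) ∧
    cell (m+1) (dbl (topC m) (0, 0)) = dbl (cornerC m) (1, 1) ∧
    cell (m+1) (dbl (cornerC m) (1, 1)) = dbl (baseC m) (1, 0) ∧
    cell (m+1) (dbl (topC m) (1, 0)) = dbl (cornerC m) (0, 0) := by
  obtain ⟨hN, hM⟩ := two_pow_facts m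
  simp only [cell, dbl, topC, baseC, cornerC, Prod.mk.injEq]
  generalize 2 ^ (m+2) = M at *
  generalize 2 ^ (m+1) = N at *
  subst hM
  refine ⟨?_, ?_, ?_, ?_, ?_, ?_⟩
  all_goals
    simp only [mul_zero, zero_add, add_zero, and_true, and_false,
      reduceIte, zero_ne_one, one_ne_zero]
    repeat first | rw [if_pos (by omega)] | rw [if_neg (by omega)]
    simp only [Prod.mk.injEq, and_true, true_and]
    try omega

/-! ### The column of grid squares -/

/-- The `cell m`-orbit of `baseC m` is a column with levels `0, …, h`: it first reaches `topC m` at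
time `h`, avoids the corner square, and visits every other square of the grid. -/
structure IsTower (m h : ℕ) : Prop where
  avoid : ∀ i < h, (cell m)^[i] (baseC m) ≠ topC m ∧ (cell m)^[i] (baseC m) ≠ cornerC m
  top : (cell m)^[h] (baseC m) = topC m
  cover : ∀ p : ℕ × ℕ, p.1 < 2 ^ (m+1) → p.2 < 2 ^ (m+1) → p ≠ cornerC m →
    ∃ i ≤ h, (cell m)^[i] (baseC m) = p

lemma IsTower.lift {m h : ℕ} (H : IsTower m h) (α : ℕ × ℕ) (h1 : α.1 < 2) (h2 : α.2 < 2)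
    (i : ℕ) (hi : i ≤ h) :
    (cell (m+1))^[i] (dbl (baseC m) α) = dbl ((cell m)^[i] (baseC m)) α := by
  induction i with
  | zero => rfl
  | succ i ih =>
    rw [Function.iterate_succ_apply', Function.iterate_succ_apply', ih (by omega)]
    exact cell_dbl m _ _ h1 h2 (H.avoid i (by omega)).1 (H.avoid i (by omega)).2

lemma IsTower.ne_corner {m h : ℕ} (H : IsTower m h) (i : ℕ) (hi : i ≤ h) :
    (cell m)^[i] (baseC m) ≠ cornerC m := by
  rcases hi.lt_or_eq with hi | rfl
  · exact (H.avoid i hi).2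
  · rw [H.top]
    obtain ⟨hN, hM⟩ := two_pow_facts m
    simp only [topC, cornerC, ne_eq, Prod.mk.injEq]
    omega

lemma baseC_succ (m : ℕ) : baseC (m+1) = dbl (baseC m) (0, 1) := by
  obtain ⟨hN, hM⟩ := two_pow_facts m
  simp only [baseC, dbl, Prod.mk.injEq, mul_zero, add_zero, true_and]
  omega

lemma topC_succ (m : ℕ) : topC (m+1) = dbl (cornerC m) (0, 0) := by
  obtain ⟨hN, hM⟩ := two_pow_facts m
  simp only [topC, cornerC, dbl, Prod.mk.injEq, mul_zero, add_zero, and_true]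
  omega

lemma cornerC_succ (m : ℕ) : cornerC (m+1) = dbl (cornerC m) (1, 0) := by
  obtain ⟨hN, hM⟩ := two_pow_facts m
  simp only [cornerC, dbl, Prod.mk.injEq, mul_zero, add_zero, and_true]
  omega

lemma dbl_inj {p q α β : ℕ × ℕ} (h1 : α.1 < 2) (h2 : α.2 < 2) (h3 : β.1 < 2) (h4 : β.2 < 2)
    (h : dbl p α = dbl q β) : p = q ∧ α = β := by
  simp only [dbl, Prod.mk.injEq] at h
  constructor <;> ext <;> omega

/-- Cutting and stacking: the orbit of `baseC (m+1)` runs through the upper left, upper right,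
lower left and lower right quarters of the column, with one spacer after each of the last
three. -/
lemma IsTower.pieces {m h : ℕ} (H : IsTower m h) :
    (∀ i ≤ h, (cell (m+1))^[i] (baseC (m+1)) = dbl ((cell m)^[i] (baseC m)) (0, 1)) ∧
    (∀ i ≤ h, (cell (m+1))^[i + (h+1)] (baseC (m+1)) = dbl ((cell m)^[i] (baseC m)) (1, 1)) ∧
    (cell (m+1))^[2*h+2] (baseC (m+1)) = dbl (cornerC m) (0, 1) ∧
    (∀ i ≤ h, (cell (m+1))^[i + (2*h+3)] (baseC (m+1)) = dbl ((cell m)^[i] (baseC m)) (0, 0)) ∧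
    (cell (m+1))^[3*h+4] (baseC (m+1)) = dbl (cornerC m) (1, 1) ∧
    (∀ i ≤ h, (cell (m+1))^[i + (3*h+5)] (baseC (m+1)) = dbl ((cell m)^[i] (baseC m)) (1, 0)) ∧
    (cell (m+1))^[4*h+6] (baseC (m+1)) = dbl (cornerC m) (0, 0) := by
  obtain ⟨s1, s2, s3, s4, s5, s6⟩ := cell_special m
  have A1 : ∀ i ≤ h, (cell (m+1))^[i] (baseC (m+1)) = dbl ((cell m)^[i] (baseC m)) (0, 1) := by
    intro i hi
    rw [baseC_succ, H.lift _ (by simp) (by simp) i hi]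
  have A2 : ∀ i ≤ h, (cell (m+1))^[i + (h+1)] (baseC (m+1)) =
      dbl ((cell m)^[i] (baseC m)) (1, 1) := by
    intro i hi
    rw [Function.iterate_add_apply, Function.iterate_succ_apply', A1 h le_rfl, H.top, s1,
      H.lift _ (by simp) (by simp) i hi]
  have A3 : (cell (m+1))^[2*h+2] (baseC (m+1)) = dbl (cornerC m) (0, 1) := by
    rw [show 2*h+2 = (h + (h+1)) + 1 by ring, Function.iterate_succ_apply', A2 h le_rfl, H.top, s2]
  have A4 : ∀ i ≤ h, (cell (m+1))^[i + (2*h+3)] (baseC (m+1)) =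
      dbl ((cell m)^[i] (baseC m)) (0, 0) := by
    intro i hi
    rw [Function.iterate_add_apply, Function.iterate_succ_apply', A3, s3,
      H.lift _ (by simp) (by simp) i hi]
  have A5 : (cell (m+1))^[3*h+4] (baseC (m+1)) = dbl (cornerC m) (1, 1) := by
    rw [show 3*h+4 = (h + (2*h+3)) + 1 by ring, Function.iterate_succ_apply', A4 h le_rfl,
      H.top, s4]
  have A6 : ∀ i ≤ h, (cell (m+1))^[i + (3*h+5)] (baseC (m+1)) =
      dbl ((cell m)^[i] (baseC m)) (1, 0) := by
    intro i hi
    rw [Function.iterate_add_apply, Function.iterate_succ_apply', A5, s5,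
      H.lift _ (by simp) (by simp) i hi]
  refine ⟨A1, A2, A3, A4, A5, A6, ?_⟩
  rw [show 4*h+6 = (h + (3*h+5)) + 1 by ring, Function.iterate_succ_apply', A6 h le_rfl,
    H.top, s6]

lemma isTower_succ {m h : ℕ} (H : IsTower m h) : IsTower (m+1) (4*h+6) := by
  obtain ⟨A1, A2, A3, A4, A5, A6, A7⟩ := H.pieces
  refine ⟨?_, by rw [A7, topC_succ], ?_⟩
  · intro i hi
    -- every earlier level lies over a non-corner cell, or is one of the two upper corner cells
    have key : (∃ q α : ℕ × ℕ, α.1 < 2 ∧ α.2 < 2 ∧ (q ≠ cornerC m ∨ α.2 = 1) ∧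
        (cell (m+1))^[i] (baseC (m+1)) = dbl q α) := by
      by_cases c1 : i ≤ h
      · exact ⟨_, _, by simp, by simp, Or.inl (H.ne_corner i c1), A1 i c1⟩
      by_cases c2 : i ≤ 2*h+1
      · obtain ⟨j, rfl⟩ := Nat.exists_eq_add_of_le' (show h+1 ≤ i by omega)
        exact ⟨_, _, by simp, by simp, Or.inl (H.ne_corner j (by omega)), A2 j (by omega)⟩
      by_cases c3 : i = 2*h+2
      · subst c3
        exact ⟨_, _, by simp, by simp, Or.inr rfl, A3⟩
      by_cases c4 : i ≤ 3*h+3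
      · obtain ⟨j, rfl⟩ := Nat.exists_eq_add_of_le' (show 2*h+3 ≤ i by omega)
        exact ⟨_, _, by simp, by simp, Or.inl (H.ne_corner j (by omega)), A4 j (by omega)⟩
      by_cases c5 : i = 3*h+4
      · subst c5
        exact ⟨_, _, by simp, by simp, Or.inr rfl, A5⟩
      · obtain ⟨j, rfl⟩ := Nat.exists_eq_add_of_le' (show 3*h+5 ≤ i by omega)
        exact ⟨_, _, by simp, by simp, Or.inl (H.ne_corner j (by omega)), A6 j (by omega)⟩
    obtain ⟨q, α, h1, h2, h3, h4⟩ := key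
    rw [h4, topC_succ, cornerC_succ]
    constructor <;> intro h5 <;>
      obtain ⟨h6, h7⟩ := dbl_inj h1 h2 (by simp) (by simp) h5 <;> simp_all
  · intro p hp1 hp2 hp
    obtain ⟨hN, hM⟩ := two_pow_facts m
    rw [hM] at hp1 hp2
    have hpd : p = dbl (p.1 / 2, p.2 / 2) (p.1 % 2, p.2 % 2) := by
      simp only [dbl]; ext <;> simp only <;> omega
    have hα : (p.1 % 2, p.2 % 2) = (0, 0) ∨ (p.1 % 2, p.2 % 2) = (0, 1) ∨
        (p.1 % 2, p.2 % 2) = (1, 0) ∨ (p.1 % 2, p.2 % 2) = (1, 1) := by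
      simp only [Prod.mk.injEq]; omega
    rw [cornerC_succ] at hp
    by_cases hq : ((p.1 / 2, p.2 / 2) : ℕ × ℕ) = cornerC m
    · rw [hq] at hpd
      rcases hα with e | e | e | e <;> rw [e] at hpd
      · exact ⟨_, le_rfl, by rw [A7, hpd]⟩
      · exact ⟨2*h+2, by omega, by rw [A3, hpd]⟩
      · exact absurd hpd hp
      · exact ⟨3*h+4, by omega, by rw [A5, hpd]⟩
    · obtain ⟨i, hi, he⟩ := H.cover (p.1/2, p.2/2) (by simp only; omega) (by simp only; omega) hq
      rcases hα with e | e | e | e <;> rw [e, ← he] at hpd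
      · refine ⟨_, ?_, (A4 i hi).trans hpd.symm⟩; omega
      · refine ⟨_, ?_, (A1 i hi).trans hpd.symm⟩; omega
      · refine ⟨_, ?_, (A6 i hi).trans hpd.symm⟩; omega
      · refine ⟨_, ?_, (A2 i hi).trans hpd.symm⟩; omega

lemma isTower (m : ℕ) : IsTower m (4 ^ (m+1) - 2) := by
  induction m with
  | zero =>
    refine ⟨?_, by decide, ?_⟩
    · intro i hi
      have : i < 2 := hi
      interval_cases i <;> decide
    · rintro ⟨a, b⟩ ha hb hp
      simp only [zero_add, pow_one] at ha hb
      interval_cases a <;> interval_cases b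
      · exact ⟨2, by norm_num, by decide⟩
      · exact ⟨0, by norm_num, by decide⟩
      · exact absurd rfl hp
      · exact ⟨1, by norm_num, by decide⟩
  | succ m ih =>
    have : 4 * (4 ^ (m+1) - 2) + 6 = 4 ^ (m+1+1) - 2 := by
      have : 1 ≤ 4 ^ m := Nat.one_le_pow _ _ (by norm_num)
      have h4 : 4 ^ (m+1+1) = 4 * 4 ^ (m+1) := by ring
      have h5 : 4 ^ (m+1) = 4 * 4 ^ m := by ring
      omega
    rw [← this]
    exact isTower_succ ih

/-- The height of the column of `cell m` is the time `cell (m+1)` takes from an upper left quarter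
to the upper right quarter of the same square, and meanwhile no quarter of the corner is
visited. -/
lemma cell_return (m : ℕ) (p : ℕ × ℕ) (h1 : p.1 < 2 ^ (m+1)) (h2 : p.2 < 2 ^ (m+1))
    (hp : p ≠ cornerC m) :
    (cell (m+1))^[4 ^ (m+1) - 1] (dbl p (0, 1)) = dbl p (1, 1) ∧
    ∀ j < 4 ^ (m+1) - 1, ∃ q α : ℕ × ℕ, q ≠ cornerC m ∧ α.1 < 2 ∧ α.2 < 2 ∧
      (cell (m+1))^[j] (dbl p (0, 1)) = dbl q α := by
  have H := isTower m
  obtain ⟨A1, A2, -⟩ := H.pieces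
  obtain ⟨i, hi, he⟩ := H.cover p h1 h2 hp
  have : 1 ≤ 4 ^ m := Nat.one_le_pow _ _ (by norm_num)
  have h5 : 4 ^ (m+1) = 4 * 4 ^ m := by ring
  have e := A1 i hi
  rw [he] at e
  simp only [← e, ← Function.iterate_add_apply]
  constructor
  · have := A2 i hi
    rw [he] at this
    rw [← this]
    congr 1
    omega
  · intro j hj
    by_cases c : j + i ≤ 4 ^ (m+1) - 2
    · exact ⟨_, _, H.ne_corner _ c, by simp, by simp, A1 _ c⟩
    · obtain ⟨l, hl⟩ := Nat.exists_eq_add_of_le' (show 4 ^ (m+1) - 2 + 1 ≤ j + i by omega)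
      rw [hl]
      exact ⟨_, _, H.ne_corner l (by omega), by simp, by simp, A2 l (by omega)⟩

/-! ### Grid coordinates on the torus -/

lemma rep_coe {a : ℝ} (h0 : 0 ≤ a) (h1 : a < 1) : rep (a : AddCircle (1:ℝ)) = a := by
  have h : a ∈ Ico (0:ℝ) (0 + 1) := ⟨h0, by simpa using h1⟩
  simp only [rep]
  rw [AddCircle.equivIco_coe_eq h]

lemma coe_rep (x : AddCircle (1:ℝ)) : ((rep x : ℝ) : AddCircle (1:ℝ)) = x :=
  AddCircle.coe_equivIco

lemma rep_mem (x : AddCircle (1:ℝ)) : 0 ≤ rep x ∧ rep x < 1 := by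
  have := ((AddCircle.equivIco (1:ℝ) 0) x).2
  simpa [rep] using this

lemma tv_add (a b c d : ℝ) : tv a b + tv c d = tv (a + c) (b + d) := by
  simp [tv]

/-- The point of the grid square `p` of side `2 ^ (-(m+1))` with relative position `(u, w)` in that
square. -/
def pt (m : ℕ) (p : ℕ × ℕ) (u w : ℝ) : T2 := tv ((p.1 + u) / 2 ^ (m+1)) ((p.2 + w) / 2 ^ (m+1))

lemma rep_grid {M a : ℕ} {u : ℝ} (ha : a < M) (hu : u ∈ Ico (0:ℝ) 1) :
    rep (((a + u) / M : ℝ) : AddCircle (1:ℝ)) = (a + u) / M := by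
  have hM : (0:ℝ) < M := by exact_mod_cast (by omega : 0 < M)
  have : (a:ℝ) + 1 ≤ M := by exact_mod_cast ha
  obtain ⟨h0, h1⟩ := hu
  apply rep_coe
  · positivity
  · rw [div_lt_one hM]; linarith

lemma rep_pt {m : ℕ} {p : ℕ × ℕ} {u w : ℝ} (h1 : p.1 < 2 ^ (m+1)) (h2 : p.2 < 2 ^ (m+1))
    (hu : u ∈ Ico (0:ℝ) 1) (hw : w ∈ Ico (0:ℝ) 1) :
    rep (pt m p u w).1 = (p.1 + u) / 2 ^ (m+1) ∧ rep (pt m p u w).2 = (p.2 + w) / 2 ^ (m+1) := by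
  have e1 := rep_grid h1 hu
  have e2 := rep_grid h2 hw
  push_cast at e1 e2
  exact ⟨e1, e2⟩

/-- Comparing `(a + u) / M` with a multiple `k / M` of the grid size only involves `a` and `k`. -/
lemma grid_le_iff {M : ℝ} (hM : 0 < M) {a : ℕ} {u : ℝ} (hu : u ∈ Ico (0:ℝ) 1) (k : ℤ) {r : ℝ}
    (hr : r * M = k) : r ≤ (a + u) / M ↔ k ≤ a := by
  rw [le_div_iff₀ hM, hr]
  obtain ⟨h0, h1⟩ := hu
  constructor
  · intro h
    have : (k:ℝ) < (a:ℤ) + 1 := by push_cast; linarith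
    have : k < (a:ℤ) + 1 := by exact_mod_cast this
    omega
  · intro h
    have : (k:ℝ) ≤ (a:ℤ) := by exact_mod_cast h
    push_cast at this
    linarith

lemma grid_lt_iff {M : ℝ} (hM : 0 < M) {a : ℕ} {u : ℝ} (hu : u ∈ Ico (0:ℝ) 1) (k : ℤ) {r : ℝ}
    (hr : r * M = k) : (a + u) / M < r ↔ a < k := by
  rw [← not_le, grid_le_iff hM hu k hr, not_le]

lemma grid_shift {M : ℝ} (hM : 0 < M) (i j i' j' : ℕ) (u w : ℝ) {x y : ℝ}
    (hx : x * M = i' - i) (hy : y * M = j' - j) :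
    tv ((i + u) / M) ((j + w) / M) + tv x y = tv ((i' + u) / M) ((j' + w) / M) := by
  rw [tv_add]
  congr 1
  · field_simp; linarith
  · field_simp; linarith

lemma pt_dbl (m : ℕ) (p α : ℕ × ℕ) (u w : ℝ) :
    pt (m+1) (dbl p α) u w = pt m p ((α.1 + u) / 2) ((α.2 + w) / 2) := by
  simp only [pt, dbl]
  push_cast
  congr 1 <;> (field_simp; ring)

lemma half_mem {a : ℕ} {u : ℝ} (ha : a < 2) (hu : u ∈ Ico (0:ℝ) 1) :
    ((a:ℝ) + u) / 2 ∈ Ico (0:ℝ) 1 := by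
  obtain ⟨h0, h1⟩ := hu
  have : (a:ℝ) ≤ 1 := by exact_mod_cast (by omega : a ≤ 1)
  constructor
  · positivity
  · linarith

lemma dbl_half (p : ℕ × ℕ) : dbl (p.1 / 2, p.2 / 2) (p.1 % 2, p.2 % 2) = p := by
  simp only [dbl]; ext <;> simp only <;> omega

lemma cell_lt (m : ℕ) (p : ℕ × ℕ) (h1 : p.1 < 2 ^ (m+1)) (h2 : p.2 < 2 ^ (m+1)) :
    (cell m p).1 < 2 ^ (m+1) ∧ (cell m p).2 < 2 ^ (m+1) := by
  induction m generalizing p with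
  | zero =>
    simp only [cell]
    split_ifs <;> simp_all
  | succ m ih =>
    obtain ⟨hN, hM⟩ := two_pow_facts m
    have ih := ih (p.1 / 2, p.2 / 2) (by simp only; omega) (by simp only; omega)
    simp only [cell]
    split_ifs <;> (try simp only) <;> omega

/-- `chaconU (n+2)` modifies `chaconU (n+1)` only in a rectangle at the lower right corner. -/
lemma chaconU_outside (n : ℕ) (x : T2)
    (h : ¬ (1 - 4 * (1 / 2 ^ (n+2)) ≤ rep x.1 ∧ rep x.2 < 2 * (1 / 2 ^ (n+2)))) :
    chaconU (n+2) x = chaconU (n+1) x := by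
  have hs : (0:ℝ) < 1 / 2 ^ (n+2) := by positivity
  simp only [chaconU]
  generalize (1 / 2 ^ (n+2) : ℝ) = s at *
  repeat rw [if_neg (by rintro ⟨_, _, _, _⟩; exact h ⟨by linarith, by linarith⟩)]

/-- `chaconU (m+1)` permutes the grid squares through `cell m`, preserving relative positions. -/
lemma chaconU_pt (m : ℕ) (p : ℕ × ℕ) (u w : ℝ) (h1 : p.1 < 2 ^ (m+1)) (h2 : p.2 < 2 ^ (m+1))
    (hu : u ∈ Ico (0:ℝ) 1) (hw : w ∈ Ico (0:ℝ) 1) :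
    chaconU (m+1) (pt m p u w) = pt m (cell m p) u w := by
  induction m generalizing p u w with
  | zero =>
    obtain ⟨r1, r2⟩ := rep_pt h1 h2 hu hw
    simp only [chaconU, r1, r2, zero_add, pow_one]
    have z : (0:ℝ) < 2 := by norm_num
    simp only [grid_le_iff z hu 0 (r := 0) (by simp), grid_le_iff z hu 1 (r := 1/2) (by simp),
      grid_lt_iff z hu 1 (r := 1/2) (by simp), grid_lt_iff z hu 2 (r := 1) (by simp),
      grid_le_iff z hw 0 (r := 0) (by simp), grid_le_iff z hw 1 (r := 1/2) (by simp),
      grid_lt_iff z hw 1 (r := 1/2) (by simp), grid_lt_iff z hw 2 (r := 1) (by simp)]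
    obtain ⟨a, b⟩ := p
    simp only [zero_add, pow_one] at h1 h2
    simp only [pt, zero_add, pow_one]
    interval_cases a <;> interval_cases b <;> norm_num [cell]
    all_goals
      rw [tv_add]
      congr 1 <;> ring
  | succ m ih =>
    obtain ⟨hN, hM⟩ := two_pow_facts m
    obtain ⟨r1, r2⟩ := rep_pt h1 h2 hu hw
    have z : (0:ℝ) < 2 ^ (m+2) := by positivity
    have hMM : ((2 ^ (m+2) : ℕ) : ℝ) = 2 ^ (m+2) := by push_cast; rfl
    have a4 : (1 - 4 * (1 / 2 ^ (m+2)) : ℝ) * 2 ^ (m+2) = ((2 ^ (m+2) - 4 : ℤ) : ℝ) := by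
      push_cast; field_simp
    have a3 : (1 - 3 * (1 / 2 ^ (m+2)) : ℝ) * 2 ^ (m+2) = ((2 ^ (m+2) - 3 : ℤ) : ℝ) := by
      push_cast; field_simp
    have a2 : (1 - 2 * (1 / 2 ^ (m+2)) : ℝ) * 2 ^ (m+2) = ((2 ^ (m+2) - 2 : ℤ) : ℝ) := by
      push_cast; field_simp
    have a1 : (1 - (1 / 2 ^ (m+2)) : ℝ) * 2 ^ (m+2) = ((2 ^ (m+2) - 1 : ℤ) : ℝ) := by
      push_cast; field_simp
    have a0 : (1 : ℝ) * 2 ^ (m+2) = ((2 ^ (m+2) : ℤ) : ℝ) := by push_cast; ring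
    have b0 : (0 : ℝ) * 2 ^ (m+2) = ((0 : ℤ) : ℝ) := by push_cast; ring
    have b1 : (1 / 2 ^ (m+2) : ℝ) * 2 ^ (m+2) = ((1 : ℤ) : ℝ) := by push_cast; field_simp
    have b2 : (2 * (1 / 2 ^ (m+2)) : ℝ) * 2 ^ (m+2) = ((2 : ℤ) : ℝ) := by push_cast; field_simp
    have hZ : (2 ^ (m+2) : ℤ) = ((2 ^ (m+2) : ℕ) : ℤ) := by push_cast; rfl
    by_cases hreg : p.2 < 2 ∧ 2 ^ (m+2) ≤ p.1 + 4
    · simp only [chaconU, r1, r2]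
      simp only [grid_le_iff z hu _ a4, grid_le_iff z hu _ a3, grid_le_iff z hu _ a2,
        grid_le_iff z hu _ a1, grid_lt_iff z hu _ a0, grid_lt_iff z hu _ a1,
        grid_lt_iff z hu _ a2, grid_lt_iff z hu _ a3, grid_le_iff z hw _ b0,
        grid_le_iff z hw _ b1, grid_lt_iff z hw _ b1, grid_lt_iff z hw _ b2, hZ]
      obtain ⟨a, b⟩ := p
      -- `c` is the distance of the square from the right edge, so there are eight squares left
      obtain ⟨hb, c, hc⟩ : b < 2 ∧ ∃ c, 2 ^ (m+2) = a + c :=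
        ⟨hreg.1, _, (Nat.add_sub_of_le h1.le).symm⟩
      simp only at hreg h1 h2
      simp only [cell, pt, Prod.mk.injEq]
      have hc4 : c ≤ 4 := by omega
      have hc1 : 1 ≤ c := by omega
      have hac : (a:ℝ) = 2 ^ (m+2) - c := by
        rw [← hMM, hc]; push_cast; ring
      have k1 : ((2 ^ (m+2) - 1 : ℕ) : ℝ) = 2 ^ (m+2) - 1 := by
        rw [Nat.cast_sub (by omega), hMM, Nat.cast_one]
      have k2 : ((2 ^ (m+2) - 2 : ℕ) : ℝ) = 2 ^ (m+2) - 2 := by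
        rw [Nat.cast_sub (by omega), hMM, Nat.cast_ofNat]
      interval_cases c <;> interval_cases b
      all_goals
        repeat first | rw [if_pos (by omega)] | rw [if_neg (by omega)]
      all_goals first
        | rfl
        | (refine grid_shift z _ _ _ _ _ _ ?_ ?_ <;>
            (simp only [k1, k2, hac, Nat.cast_zero, Nat.cast_one, Nat.cast_ofNat]; field_simp; ring))
    · have hq := dbl_half p
      rw [chaconU_outside]
      · conv_lhs => rw [← hq]
        rw [pt_dbl, ih _ _ _ (by simp only; omega) (by simp only; omega)
          (half_mem (Nat.mod_lt _ two_pos) hu) (half_mem (Nat.mod_lt _ two_pos) hw)]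
        have e := pt_dbl m (cell m (p.1 / 2, p.2 / 2)) (p.1 % 2, p.2 % 2) u w
        rw [← cell_dbl m _ _ (Nat.mod_lt _ two_pos) (Nat.mod_lt _ two_pos), hq] at e
        · exact e.symm
        · intro h
          simp only [topC, Prod.mk.injEq] at h
          omega
        · intro h
          simp only [cornerC, Prod.mk.injEq] at h
          omega
      · rw [r1, r2, grid_le_iff z hu _ a4, grid_lt_iff z hw _ b2]
        omega

/-! ### Passing to the limit map -/

/-- Outside the corner square of side `2 ^ (-(m+1))`, the maps `chaconU n` agree for
`n ≥ m + 2`. -/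
lemma chaconU_stable (m : ℕ) (q α : ℕ × ℕ) (u w : ℝ) (h1 : q.1 < 2 ^ (m+1))
    (h2 : q.2 < 2 ^ (m+1)) (hq : q ≠ cornerC m) (ha1 : α.1 < 2) (ha2 : α.2 < 2)
    (hu : u ∈ Ico (0:ℝ) 1) (hw : w ∈ Ico (0:ℝ) 1) (n : ℕ) (hn : m + 2 ≤ n) :
    chaconU n (pt (m+1) (dbl q α) u w) = chaconU (m+2) (pt (m+1) (dbl q α) u w) := by
  induction n, hn using Nat.le_induction with
  | base => rfl
  | succ n hn ih =>
    rw [← ih]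
    obtain ⟨l, rfl⟩ := Nat.exists_eq_add_of_le' (show 1 ≤ n by omega)
    apply chaconU_outside
    rw [pt_dbl]
    obtain ⟨r1, r2⟩ := rep_pt h1 h2 (half_mem ha1 hu) (half_mem ha2 hw)
    rw [r1, r2]
    have z : (0:ℝ) < 2 ^ (m+1) := by positivity
    have hs : (1 / 2 ^ (l+2) : ℝ) ≤ 1 / 2 ^ (m+3) :=
      one_div_le_one_div_of_le (by positivity) (pow_le_pow_right₀ (by norm_num) (by omega))
    have hs3 : (1 / 2 ^ (m+3) : ℝ) = 1 / 2 ^ (m+1) / 4 := by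
      rw [pow_add _ m 3, pow_add _ m 1]; field_simp; norm_num
    have hpos : (0:ℝ) < 1 / 2 ^ (m+1) := by positivity
    rintro ⟨g1, g2⟩
    have g1' : (1 - 1 / 2 ^ (m+1) : ℝ) ≤ (q.1 + (α.1 + u) / 2) / 2 ^ (m+1) := by linarith
    have g2' : (q.2 + (α.2 + w) / 2) / 2 ^ (m+1) < (1 / 2 ^ (m+1) : ℝ) := by linarith
    rw [grid_le_iff z (half_mem ha1 hu) (((2 ^ (m+1) : ℕ) : ℤ) - 1)
      (by push_cast; field_simp)] at g1'
    rw [grid_lt_iff z (half_mem ha2 hw) 1 (by push_cast; field_simp)] at g2'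
    apply hq
    ext <;> simp only [cornerC] <;> omega

/-- The points at which the sequence `chaconU n x` stabilizes with value `U x`. -/
def Good (U : T2 → T2) : Set T2 := {x | ∃ N : ℕ, ∀ n, N ≤ n → chaconU n x = U x}

/-- If the whole forward `U`-orbit of a point of an upper left quarter consists of points where the
limit is attained, `U ^ (4 ^ (m+1) - 1)` moves that point to the upper right quarter. -/
lemma iterate_return (U : T2 → T2) (m : ℕ) (p : ℕ × ℕ) (u w : ℝ) (h1 : p.1 < 2 ^ (m+1))
    (h2 : p.2 < 2 ^ (m+1)) (hp : p ≠ cornerC m) (hu : u ∈ Ico (0:ℝ) 1) (hw : w ∈ Ico (0:ℝ) 1)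
    (hG : ∀ j : ℕ, U^[j] (pt (m+1) (dbl p (0, 1)) u w) ∈ Good U) :
    U^[4 ^ (m+1) - 1] (pt (m+1) (dbl p (0, 1)) u w) = pt (m+1) (dbl p (1, 1)) u w := by
  obtain ⟨hret, hav⟩ := cell_return m p h1 h2 hp
  obtain ⟨hN, hM⟩ := two_pow_facts m
  have key : ∀ j ≤ 4 ^ (m+1) - 1,
      U^[j] (pt (m+1) (dbl p (0, 1)) u w) = pt (m+1) ((cell (m+1))^[j] (dbl p (0, 1))) u w ∧
      ((cell (m+1))^[j] (dbl p (0, 1))).1 < 2 ^ (m+2) ∧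
      ((cell (m+1))^[j] (dbl p (0, 1))).2 < 2 ^ (m+2) := by
    intro j hj
    induction j with
    | zero =>
      refine ⟨rfl, ?_, ?_⟩ <;> simp only [Function.iterate_zero, id, dbl] <;> omega
    | succ j ih =>
      obtain ⟨e, l1, l2⟩ := ih (by omega)
      rw [Function.iterate_succ_apply', Function.iterate_succ_apply']
      refine ⟨?_, cell_lt (m+1) _ l1 l2⟩
      rw [← chaconU_pt (m+1) _ u w l1 l2 hu hw]
      obtain ⟨N, hNG⟩ := hG j
      rw [e] at hNG ⊢
      obtain ⟨q, α, hq, ha1, ha2, he⟩ := hav j (by omega)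
      rw [he] at hNG l1 l2 ⊢
      simp only [dbl] at l1 l2
      rw [← hNG (max N (m+2)) (le_max_left _ _)]
      exact chaconU_stable m q α u w (by omega) (by omega) hq ha1 ha2 hu hw _ (le_max_right _ _)
  rw [(key _ le_rfl).1, hret]

/-! ### Measures -/

lemma exists_grid (M : ℕ) (hM : 0 < M) (x : AddCircle (1:ℝ)) :
    ∃ a < M, ∃ u ∈ Ico (0:ℝ) 1, x = (((a + u) / M : ℝ) : AddCircle (1:ℝ)) := by
  obtain ⟨h0, h1⟩ := rep_mem x
  have hM' : (0:ℝ) < M := by exact_mod_cast hM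
  have hp : 0 ≤ rep x * M := by positivity
  refine ⟨⌊rep x * M⌋₊, ?_, rep x * M - ⌊rep x * M⌋₊, ⟨?_, ?_⟩, ?_⟩
  · rw [Nat.floor_lt hp]
    nlinarith
  · linarith [Nat.floor_le hp]
  · linarith [Nat.lt_floor_add_one (rep x * M)]
  · rw [add_sub_cancel, mul_div_cancel_right₀ _ hM'.ne', coe_rep]

lemma exists_pt (m : ℕ) (x : T2) : ∃ p : ℕ × ℕ, p.1 < 2 ^ (m+1) ∧ p.2 < 2 ^ (m+1) ∧
    ∃ u ∈ Ico (0:ℝ) 1, ∃ w ∈ Ico (0:ℝ) 1, x = pt m p u w := by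
  obtain ⟨a, ha, u, hu, e1⟩ := exists_grid (2 ^ (m+1)) (by positivity) x.1
  obtain ⟨b, hb, w, hw, e2⟩ := exists_grid (2 ^ (m+1)) (by positivity) x.2
  refine ⟨(a, b), ha, hb, u, hu, w, hw, ?_⟩
  push_cast at e1 e2
  ext
  · rw [e1]; rfl
  · rw [e2]; rfl

lemma measurable_rep : Measurable rep :=
  measurable_subtype_coe.comp (AddCircle.measurableEquivIco (1:ℝ) 0).measurable

lemma volume_rep_Ico {c d : ℝ} (hc : 0 ≤ c) (hd : d ≤ 1) :
    volume {x : AddCircle (1:ℝ) | c ≤ rep x ∧ rep x < d} = ENNReal.ofReal (d - c) := by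
  have hm : MeasurableSet {x : AddCircle (1:ℝ) | c ≤ rep x ∧ rep x < d} :=
    measurable_rep measurableSet_Ico
  rw [AddCircle.add_projection_respects_measure (1:ℝ) 0 hm, ← Real.volume_Ico]
  apply measure_congr
  -- the two sets agree away from the endpoints `0` and `1`
  filter_upwards [Measure.ae_ne volume (0:ℝ), Measure.ae_ne volume (1:ℝ)] with y h0 h1
  apply propext
  change ((c ≤ rep (y : AddCircle (1:ℝ)) ∧ rep (y : AddCircle (1:ℝ)) < d) ∧ (0 < y ∧ y ≤ 0 + 1)) ↔
    (c ≤ y ∧ y < d)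
  constructor
  · rintro ⟨h, h2, h3⟩
    rwa [rep_coe h2.le (lt_of_le_of_ne (by linarith) h1)] at h
  · rintro ⟨h2, h3⟩
    have h4 : 0 < y := lt_of_le_of_ne (by linarith) h0.symm
    rw [rep_coe h4.le (by linarith)]
    exact ⟨⟨h2, h3⟩, h4, by linarith⟩

lemma volume_Q (n : ℕ) (hn : 2 ≤ n) :
    volume {x : T2 | 0 ≤ rep x.1 ∧ rep x.1 < 2/2^n ∧ 1 - 2/2^n ≤ rep x.2 ∧ rep x.2 < 1}
      = 4 / 4 ^ n := by
  have hle : (2:ℝ) / 2 ^ n ≤ 1 := by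
    rw [div_le_one (by positivity)]
    calc (2:ℝ) = 2 ^ 1 := by norm_num
      _ ≤ 2 ^ n := pow_le_pow_right₀ (by norm_num) (by omega)
  have e : {x : T2 | 0 ≤ rep x.1 ∧ rep x.1 < 2/2^n ∧ 1 - 2/2^n ≤ rep x.2 ∧ rep x.2 < 1} =
      {x : AddCircle (1:ℝ) | 0 ≤ rep x ∧ rep x < 2/2^n} ×ˢ
      {x : AddCircle (1:ℝ) | 1 - 2/2^n ≤ rep x ∧ rep x < 1} := by
    ext x; simp only [mem_ofPred_eq, mem_prod]; tauto
  rw [e, Measure.volume_eq_prod, Measure.prod_prod, volume_rep_Ico le_rfl hle,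
    volume_rep_Ico (by linarith) le_rfl, ← ENNReal.ofReal_mul (by rw [sub_zero]; positivity)]
  have : ((2:ℝ) / 2 ^ n - 0) * (1 - (1 - 2 / 2 ^ n)) = 4 / 4 ^ n := by
    rw [show (4:ℝ) ^ n = 2 ^ n * 2 ^ n by rw [← mul_pow]; norm_num]
    field_simp; norm_num
  rw [this, ENNReal.ofReal_div_of_pos (by positivity), ENNReal.ofReal_pow (by norm_num)]
  norm_num

lemma volume_translate (c : T2) (E : Set T2) : volume ((fun x => x + c) '' E) = volume E := by
  have : (volume : Measure T2).IsAddRightInvariant := by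
    rw [Measure.volume_eq_prod]; infer_instance
  rw [Set.image_add_right, measure_preimage_add_right]

/-- The square `Q_n` is a union of squares of the finer grid of side `2 ^ (-(m+2))`. -/
lemma pt_mem_Q {m n r : ℕ} (hr : r + n = m + 2) {p : ℕ × ℕ} {u w : ℝ} (h1 : p.1 < 2 ^ (m+2))
    (h2 : p.2 < 2 ^ (m+2)) (hu : u ∈ Ico (0:ℝ) 1) (hw : w ∈ Ico (0:ℝ) 1) :
    pt (m+1) p u w ∈ {x : T2 | 0 ≤ rep x.1 ∧ rep x.1 < 2/2^n ∧ 1 - 2/2^n ≤ rep x.2 ∧ rep x.2 < 1} ↔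
      p.1 < 2 * 2 ^ r ∧ 2 ^ (m+2) ≤ p.2 + 2 * 2 ^ r := by
  have z : (0:ℝ) < 2 ^ (m+2) := by positivity
  obtain ⟨r1, r2⟩ := rep_pt h1 h2 hu hw
  have hpow : (2:ℝ) ^ (m+2) = 2 ^ r * 2 ^ n := by rw [← hr, pow_add]
  have e1 : (2 / 2 ^ n : ℝ) * 2 ^ (m+2) = ((((2 * 2 ^ r : ℕ)) : ℤ) : ℝ) := by
    rw [hpow]; push_cast; field_simp
  have e2 : (1 - 2 / 2 ^ n : ℝ) * 2 ^ (m+2) =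
      ((((2 ^ (m+2) : ℕ)) : ℤ) - (((2 * 2 ^ r : ℕ)) : ℤ) : ℤ) := by
    rw [sub_mul, e1]; push_cast; ring
  rw [mem_ofPred_eq, r1, r2, grid_lt_iff z hu _ e1, grid_le_iff z hw _ e2]
  have q1 := (rep_mem (pt (m+1) p u w).1).1
  have q2 := (rep_mem (pt (m+1) p u w).2).2
  rw [r1] at q1
  rw [r2] at q2
  constructor
  · rintro ⟨-, h, h', -⟩
    omega
  · rintro ⟨h, h'⟩
    exact ⟨q1, by omega, by omega, q2⟩

/-- For `n ≥ 2`, `k ≥ n`, and the square `Q_n = [0,2^{1-n}) × [1-2^{1-n},1)` (of measure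
`4^{1-n}`), with `h_k = 4^{k-1} - 1`, one has
`μ(U^{h_k}(Q_n) ∩ Q_n) ≥ (1/4)·μ(Q_n) = 4^{-n}`. -/
theorem chacon_return_times (U : T2 → T2)
    (hU : IsAutomorphism U)
    (hlim : ∀ᵐ x ∂(volume : Measure T2), ∃ N : ℕ, ∀ n, N ≤ n → chaconU n x = U x)
    (n : ℕ) (hn : 2 ≤ n) (k : ℕ) (hk : n ≤ k)
    (Qn : Set T2)
    (hQn : Qn = {x : T2 | 0 ≤ rep x.1 ∧ rep x.1 < 2/2^n ∧
                          1 - 2/2^n ≤ rep x.2 ∧ rep x.2 < 1}) :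
    volume Qn = 4 / 4^n ∧
    volume Qn / 4 ≤ volume (U^[4 ^ (k-1) - 1] '' Qn ∩ Qn) ∧
    (1 / 4^n : ℝ≥0∞) ≤ volume (U^[4 ^ (k-1) - 1] '' Qn ∩ Qn) := by
  have hvol : volume Qn = 4 / 4 ^ n := by rw [hQn]; exact volume_Q n hn
  suffices hmain : volume Qn / 4 ≤ volume (U^[4 ^ (k-1) - 1] '' Qn ∩ Qn) by
    refine ⟨hvol, hmain, le_trans (le_of_eq ?_) hmain⟩
    rw [hvol, ENNReal.div_right_comm, ENNReal.div_self (by norm_num) (by norm_num)]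
  obtain ⟨m, rfl⟩ := Nat.exists_eq_add_of_le' (hn.trans hk)
  obtain ⟨r, hr⟩ := Nat.exists_eq_add_of_le' hk
  replace hr := hr.symm
  rw [show m + 2 - 1 = m + 1 from rfl]
  obtain ⟨hN, hM⟩ := two_pow_facts m
  have hR : 2 * 2 ^ r ≤ 2 ^ (m+1) := by
    rw [← pow_succ']
    exact Nat.pow_le_pow_right (by norm_num) (by omega)
  have hR0 : 0 < 2 ^ r := by positivity
  -- the upper left quarters of the grid squares contained in `Qn`
  set E : Set T2 := {x | ∃ p : ℕ × ℕ, p.1 < 2 ^ r ∧ 2 ^ (m+1) ≤ p.2 + 2 ^ r ∧ p.2 < 2 ^ (m+1) ∧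
    ∃ u ∈ Ico (0:ℝ) 1, ∃ w ∈ Ico (0:ℝ) 1, x = pt (m+1) (dbl p (0, 1)) u w} with hE
  have hshift : ∀ (p α : ℕ × ℕ) (u w : ℝ), pt (m+1) (dbl p (0, 1)) u w +
      tv (α.1 / 2 ^ (m+2)) ((α.2 - 1) / 2 ^ (m+2)) = pt (m+1) (dbl p α) u w := by
    intro p α u w
    apply grid_shift (by positivity)
    · simp only [dbl]; push_cast; field_simp; ring
    · simp only [dbl]; push_cast; field_simp; ring
  have hcover : Qn ⊆ ⋃ α ∈ (Finset.range 2 ×ˢ Finset.range 2 : Finset (ℕ × ℕ)),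
      (fun x => x + tv ((α.1:ℝ) / 2 ^ (m+2)) (((α.2:ℝ) - 1) / 2 ^ (m+2))) '' E := by
    intro x hx
    obtain ⟨p, h1, h2, u, hu, w, hw, rfl⟩ := exists_pt (m+1) x
    rw [hQn, pt_mem_Q hr h1 h2 hu hw] at hx
    have h1' : p.1 < 2 ^ (m+2) := h1
    have h2' : p.2 < 2 ^ (m+2) := h2
    simp only [mem_iUnion]
    refine ⟨(p.1 % 2, p.2 % 2), ?_, pt (m+1) (dbl (p.1 / 2, p.2 / 2) (0, 1)) u w,
      ⟨(p.1 / 2, p.2 / 2), ?_, ?_, ?_, u, hu, w, hw, rfl⟩, ?_⟩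
    · simp only [Finset.mem_product, Finset.mem_range]; omega
    · simp only; omega
    · simp only; omega
    · simp only; omega
    · refine (hshift _ (p.1 % 2, p.2 % 2) u w).trans ?_
      rw [dbl_half]
  have hEvol : volume Qn / 4 ≤ volume E := by
    rw [ENNReal.div_le_iff (by norm_num) (by norm_num)]
    refine (measure_mono hcover).trans ((measure_biUnion_finset_le _ _).trans ?_)
    simp only [volume_translate, Finset.sum_const, Finset.card_product, Finset.card_range]
    rw [nsmul_eq_mul, mul_comm]
    norm_num
  refine hEvol.trans ?_
  have hmp : MeasurePreserving U (volume : Measure T2) volume := by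
    obtain ⟨hm, V, -, -, -, h⟩ := hU
    refine ⟨hm, ?_⟩
    ext A hA
    rw [Measure.map_apply hm hA, h A hA]
  have hgood : ∀ᵐ x ∂(volume : Measure T2), ∀ j : ℕ, U^[j] x ∈ Good U := by
    rw [ae_all_iff]
    intro j
    exact (hmp.iterate j).quasiMeasurePreserving.ae hlim
  have hEG : volume (E ∩ {x | ∀ j : ℕ, U^[j] x ∈ Good U}) = volume E :=
    measure_inter_conull hgood
  rw [← hEG, ← volume_translate (tv (((1, 1) : ℕ × ℕ).1 / 2 ^ (m+2))
    ((((1, 1) : ℕ × ℕ).2 - 1) / 2 ^ (m+2)))]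
  apply measure_mono
  rintro _ ⟨_, ⟨⟨p, h1, h2, h3, u, hu, w, hw, rfl⟩, hx⟩, rfl⟩
  have hpc : p ≠ cornerC m := by
    intro h
    have : p.1 = 2 ^ (m+1) - 1 := by rw [h]; rfl
    omega
  simp only [hshift p (1, 1) u w]
  refine ⟨⟨_, ?_, iterate_return U m p u w (by omega) h3 hpc hu hw hx⟩, ?_⟩
  · rw [hQn, pt_mem_Q hr _ _ hu hw] <;> simp only [dbl] <;> omega
  · rw [hQn, pt_mem_Q hr _ _ hu hw] <;> simp only [dbl] <;> omega

end
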